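/- n^{−1} max_{1 ≤ j ≤ n} (w_j^{(n)})² → 0 as n → ∞. -/

import Mathlib

open MeasureTheory Filter Topology Set

/-- Under Assumption 1 (stated for the empirical law of the weights `w⁽ⁿ⁾`),
the maximal squared weight is `o(n)`: `n⁻¹ max_{1 ≤ j ≤ n} (w_j⁽ⁿ⁾)² → 0`. -/
theorem stmt_14
    {Ω : Type*} [MeasurableSpace Ω] (P : Measure Ω) [IsProbabilityMeasure P]
    (W : Ω → ℝ) (hWmeas : Measurable W)
    (w : (n : ℕ) → Fin n → ℝ) (hwpos : ∀ n j, 0 < w n j)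
    -- `Wₙ` (the empirical law of `w⁽ⁿ⁾`) converges in distribution to `W`
    (hdist : ∀ f : BoundedContinuousFunction ℝ ℝ,
      Tendsto (fun (n : ℕ) => (n : ℝ)⁻¹ * ∑ j : Fin n, f (w n j)) atTop
        (𝓝 (∫ ω, f (W ω) ∂P)))
    -- second moments are finite and converge
    (hW2 : Integrable (fun ω => (W ω) ^ 2) P)
    (hmom : Tendsto (fun (n : ℕ) => (n : ℝ)⁻¹ * ∑ j : Fin n, (w n j) ^ 2) atTop
      (𝓝 (∫ ω, (W ω) ^ 2 ∂P))) :
    Tendsto (fun (n : ℕ) => (n : ℝ)⁻¹ * sSup (Set.range fun j : Fin n => (w n j) ^ 2))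
      atTop (𝓝 0) := by
  have hnn : ∀ n : ℕ, 0 ≤ (n : ℝ)⁻¹ * sSup (Set.range fun j : Fin n => (w n j) ^ 2) := by
    intro n
    refine mul_nonneg (by positivity) (Real.sSup_nonneg ?_)
    rintro _ ⟨j, rfl⟩
    exact sq_nonneg _
  -- truncated second moments converge
  have hk : Tendsto (fun k : ℕ => ∫ ω, min ((W ω) ^ 2) (k : ℝ) ∂P) atTop
      (𝓝 (∫ ω, (W ω) ^ 2 ∂P)) := by
    refine tendsto_integral_of_dominated_convergence (fun ω => (W ω) ^ 2) ?_ hW2 ?_ ?_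
    · intro k
      exact ((hWmeas.pow_const 2).min measurable_const).aestronglyMeasurable
    · intro k
      refine Eventually.of_forall fun ω => ?_
      rw [Real.norm_of_nonneg (le_min (sq_nonneg _) (Nat.cast_nonneg k))]
      exact min_le_left _ _
    · refine Eventually.of_forall fun ω => ?_
      refine tendsto_const_nhds.congr' ?_
      filter_upwards [tendsto_natCast_atTop_atTop.eventually_ge_atTop ((W ω) ^ 2)] with k hk
      exact (min_eq_left hk).symm
  rw [Metric.tendsto_atTop']
  intro ε hε
  obtain ⟨k, hkε⟩ := (hk.eventually (lt_mem_nhds (sub_lt_self _ hε))).exists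
  let f : BoundedContinuousFunction ℝ ℝ :=
    BoundedContinuousFunction.ofNormedAddCommGroup (fun x => min (x ^ 2) (k : ℝ))
      (by fun_prop) (k : ℝ) (by
        intro x
        rw [Real.norm_of_nonneg (le_min (sq_nonneg _) (Nat.cast_nonneg k))]
        exact min_le_right _ _)
  have hf : ∀ x, f x = min (x ^ 2) (k : ℝ) := fun x => rfl
  have h1 := hdist f
  simp only [hf] at h1
  have h0 : Tendsto (fun n : ℕ => (n : ℝ)⁻¹ * (k : ℝ)) atTop (𝓝 (0 * (k : ℝ))) :=
    tendsto_inv_atTop_nhds_zero_nat.mul_const _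
  have h2 := h0.add (hmom.sub h1)
  have h3 : 0 * (k : ℝ) + ((∫ ω, (W ω) ^ 2 ∂P) - ∫ ω, min ((W ω) ^ 2) (k : ℝ) ∂P) < ε := by
    linarith
  obtain ⟨N, hN⟩ := eventually_atTop.1 (h2.eventually (gt_mem_nhds h3))
  refine ⟨N, fun n hn => ?_⟩
  rw [Real.dist_eq, sub_zero, abs_of_nonneg (hnn n)]
  refine lt_of_le_of_lt ?_ (hN n hn.le)
  rw [← mul_sub, ← mul_add, ← Finset.sum_sub_distrib]
  refine mul_le_mul_of_nonneg_left ?_ (by positivity)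
  have hpos : ∀ i ∈ (Finset.univ : Finset (Fin n)), 0 ≤ (w n i) ^ 2 - min ((w n i) ^ 2) (k : ℝ) :=
    fun i _ => sub_nonneg.2 (min_le_left _ _)
  refine Real.sSup_le ?_ (add_nonneg (Nat.cast_nonneg k) (Finset.sum_nonneg hpos))
  rintro _ ⟨j, rfl⟩
  have := Finset.single_le_sum hpos (Finset.mem_univ j)
  have h5 := min_le_right ((w n j) ^ 2) (k : ℝ)
  simp only at this ⊢
  linarith
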